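/- Let n ≥ 1, let p(·) ∈ 𝒫^log(ℝⁿ), and let s and ν be constants with 1 < p⁻ ≤ p⁺ < s and 1 < ν < min{p⁻, 2}. Define the exponent r(·) by 1/r(x) = 1/p(x) − 1/s. If u is a weight such that u^ν belongs to A_{p(·)/ν, ∞}, then u belongs to A_{r(·), ∞}. -/

import Mathlib

/-!
The exponents are handled through their reciprocals. Put `1/t = 1/ν - 1/p`, so that
`t = ν (p/ν)'`, and `w = r'`. Then `1/w = 1/t + κ` with the *constant* `κ = 1 - 1/ν + 1/s > 0`.
Since `‖f ^ ν‖_{(p/ν)'} = ‖f‖_t ^ ν` (`luxNorm_rpow`), the `ν`-th root of the hypothesis is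
`‖u χ_B‖_∞ ‖u⁻¹ χ_B‖_t ≤ C ‖χ_B‖_t`. Hölder's inequality (`luxNorm_holder`) gives
`‖u⁻¹ χ_B‖_w ≤ 2 |B| ^ κ ‖u⁻¹ χ_B‖_t`, so it remains to prove the converse for `χ_B`:
`|B| ^ κ ‖χ_B‖_t ≤ C ‖χ_B‖_w` (`luxNorm_reverse`).

This last estimate is where log-Hölder continuity enters. If the modular of `χ_B / μ` for `w` is
at most `1`, then averaging yields a point `x ∈ B` with `μ⁻¹ ^ w(x) ≤ 2 / |B|`, that is
`|B| ^ κ / μ ≤ 2 |B| ^ (-1/t(x))`. On a small ball `|B| ^ (1/t(·))` is constant up to a bounded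
factor, so the modular for `t` is bounded. On a ball of large radius `R`, this fails near the origin
only: for `|y| ≥ R ^ (δ/2)` the decay condition still controls the oscillation of the exponent,
while on the set `|y| < R ^ (δ/2)`, of measure `≲ |B| ^ (δ/2)`, the integrand is
`≲ |B| ^ (-δ)` with `δ` a lower bound for `t(y) / t(x)` (`exists_exceptional`).
-/

open MeasureTheory Metric ENNReal NNReal

noncomputable section

/-- Euclidean space `ℝⁿ`. -/
abbrev E (n : ℕ) := EuclideanSpace ℝ (Fin n)

/-- The Luxemburg norm of `f` with respect to the variable exponent `p(·)`. -/
noncomputable def luxNorm {n : ℕ} (p : E n → ℝ) (f : E n → ℝ≥0∞) : ℝ≥0∞ :=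
  sInf {lam : ℝ≥0∞ | lam ≠ 0 ∧ (∫⁻ x, (f x / lam) ^ p x) ≤ 1}

/-- The log-Hölder continuity and log-decay conditions defining `𝒫^log`. -/
def LogHolder (n : ℕ) (p : E n → ℝ) : Prop :=
  ∃ C : ℝ,
    (∀ x y : E n, |p x - p y| ≤ C / Real.log (Real.exp 1 + 1 / dist x y)) ∧
    (∀ x y : E n, ‖x‖ ≤ ‖y‖ → |p x - p y| ≤ C / Real.log (Real.exp 1 + ‖x‖))

/-- The class `A_{p(·),∞}`: `‖u χ_B‖_∞ ‖u⁻¹ χ_B‖_{p'(·)} ≤ C ‖χ_B‖_{p'(·)}`. -/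
def AvarInf (n : ℕ) (p : E n → ℝ) (u : E n → ℝ≥0∞) : Prop :=
  ∃ C : ℝ≥0, ∀ (c : E n) (R : ℝ), 0 < R →
    essSup u (volume.restrict (ball c R)) *
        luxNorm (fun x => p x / (p x - 1)) ((ball c R).indicator (fun y => (u y)⁻¹)) ≤
      (C : ℝ≥0∞) * luxNorm (fun x => p x / (p x - 1))
        ((ball c R).indicator (fun _ => (1 : ℝ≥0∞)))

/-- The Muckenhoupt class `A₁`. -/
def A1Class (n : ℕ) (u : E n → ℝ≥0∞) : Prop :=
  ∃ C : ℝ≥0, ∀ (c : E n) (R : ℝ), 0 < R →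
    (∫⁻ y in ball c R, u y) ≤
      (C : ℝ≥0∞) * volume (ball c R) * essInf u (volume.restrict (ball c R))

/-- The variable `δ(·)`-sharp maximal function, written in terms of the conjugate
exponent `sc = s'(·)` of the exponent `s(·)` given by `δ(x)/n = 1/β − 1/s(x)`:
`f^♯(x) = sup_{B ∋ x} (|B|^{1/β} ‖χ_B‖_{s'(·)})⁻¹ ∫_B |f − m_B f|`. -/
noncomputable def sharpVar {n : ℕ} (β : ℝ) (sc : E n → ℝ) (f : E n → ℝ) (x : E n) : ℝ≥0∞ :=
  ⨆ (c : E n) (R : ℝ) (_ : 0 < R ∧ x ∈ ball c R),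
    (volume (ball c R) ^ ((1 : ℝ) / β) *
        luxNorm sc ((ball c R).indicator (fun _ => (1 : ℝ≥0∞))))⁻¹ *
      ∫⁻ y in ball c R, ENNReal.ofReal |f y - (⨍ z in ball c R, f z)|

/-! ### Rescaling and Hölder's inequality for the Luxemburg norm -/

/-- Power rescaling of the Luxemburg norm: `‖f ^ ν‖_{q(·)} = ‖f‖_{ν q(·)} ^ ν`. -/
lemma luxNorm_rpow {n : ℕ} (q : E n → ℝ) (f : E n → ℝ≥0∞) {ν : ℝ} (hν : 0 < ν) :
    luxNorm q (fun x => f x ^ ν) = luxNorm (fun x => ν * q x) f ^ ν := by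
  have key : ∀ lam : ℝ≥0∞, (∫⁻ x, (f x ^ ν / lam ^ ν) ^ q x) = ∫⁻ x, (f x / lam) ^ (ν * q x) := by
    intro lam
    congr 1
    ext x
    rw [← ENNReal.div_rpow_of_nonneg _ _ hν.le, ← ENNReal.rpow_mul]
  have hset : {lam : ℝ≥0∞ | lam ≠ 0 ∧ (∫⁻ x, (f x ^ ν / lam) ^ q x) ≤ 1} =
      (ENNReal.orderIsoRpow ν hν) ''
        {lam : ℝ≥0∞ | lam ≠ 0 ∧ (∫⁻ x, (f x / lam) ^ (ν * q x)) ≤ 1} := by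
    ext lam
    constructor
    · rintro ⟨h0, h1⟩
      have hl : (lam ^ (1 / ν)) ^ ν = lam := by
        rw [← ENNReal.rpow_mul]; field_simp; simp
      refine ⟨lam ^ (1 / ν), ⟨?_, ?_⟩, hl⟩
      · intro h
        rw [h, ENNReal.zero_rpow_of_pos hν] at hl
        exact h0 hl.symm
      · rw [← key, hl]; exact h1
    · rintro ⟨mu, ⟨h0, h1⟩, rfl⟩
      refine ⟨?_, ?_⟩
      · simp [ENNReal.orderIsoRpow, ENNReal.rpow_eq_zero_iff, h0, hν.le]
      · rw [← key] at h1; exact h1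
  unfold luxNorm
  rw [hset, sInf_image, ← OrderIso.map_sInf]
  rfl

/-- Young's inequality without constants, for exponents `1/w = 1/t + κ`: the product is bounded
by the larger of the two terms on the right. -/
lemma mul_rpow_le_add {t w κ : ℝ} (ht : 0 < t) (hw : 0 < w) (hκ : 0 < κ)
    (h : 1 / w = 1 / t + κ) (F V : ℝ≥0∞) :
    (F * (V ^ κ)⁻¹) ^ w ≤ F ^ t + V⁻¹ := by
  set M := max (F ^ t) V⁻¹ with hM
  have h1 : F ≤ M ^ (1 / t) := by
    calc F = (F ^ t) ^ (1 / t) := by rw [← ENNReal.rpow_mul]; field_simp; simp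
      _ ≤ _ := ENNReal.rpow_le_rpow (le_max_left _ _) (by positivity)
  have h2 : (V ^ κ)⁻¹ ≤ M ^ κ := by
    rw [← ENNReal.inv_rpow]
    exact ENNReal.rpow_le_rpow (le_max_right _ _) hκ.le
  calc (F * (V ^ κ)⁻¹) ^ w ≤ (M ^ (1 / t) * M ^ κ) ^ w :=
        ENNReal.rpow_le_rpow (mul_le_mul' h1 h2) hw.le
    _ = M := by
        rw [← ENNReal.rpow_add_of_nonneg _ _ (by positivity) hκ.le, ← h, ← ENNReal.rpow_mul]
        field_simp; simp
    _ ≤ _ := max_le le_self_add le_add_self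

/-- Hölder's inequality for a function supported in `B`, against `χ_B`, whose norm in the
constant exponent `1 / κ` is `|B| ^ κ`. -/
lemma luxNorm_holder {n : ℕ} (t w : E n → ℝ) {κ : ℝ} (hκ : 0 < κ)
    (ht : ∀ x, 0 < t x) (hw : ∀ x, 1 ≤ w x) (h : ∀ x, 1 / w x = 1 / t x + κ)
    {B : Set (E n)} (hB : MeasurableSet B) (h0 : volume B ≠ 0) (hT : volume B ≠ ⊤)
    (g : E n → ℝ≥0∞) :
    luxNorm w (B.indicator g) ≤ 2 * volume B ^ κ * luxNorm t (B.indicator g) := by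
  set V := volume B with hV
  have hVκ0 : V ^ κ ≠ 0 := by simp [ENNReal.rpow_eq_zero_iff, h0, hT]
  have hVκT : V ^ κ ≠ ⊤ := ENNReal.rpow_ne_top_of_nonneg hκ.le hT
  have hc0 : 2 * V ^ κ ≠ 0 := by simp [hVκ0]
  have hcT : 2 * V ^ κ ≠ ⊤ := ENNReal.mul_ne_top (by simp) hVκT
  rw [mul_comm, ← ENNReal.div_le_iff hc0 hcT]
  refine le_sInf ?_
  rintro lam ⟨hl0, hl1⟩
  rw [ENNReal.div_le_iff hc0 hcT]
  refine sInf_le ⟨mul_ne_zero hl0 hc0, ?_⟩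
  calc ∫⁻ x, (B.indicator g x / (lam * (2 * V ^ κ))) ^ w x
      ≤ ∫⁻ x, 2⁻¹ * ((B.indicator g x / lam) ^ t x + B.indicator (fun _ => V⁻¹) x) := by
        refine lintegral_mono fun x => ?_
        by_cases hx : x ∈ B
        · simp only [Set.indicator_of_mem hx]
          have hw0 : 0 < w x := lt_of_lt_of_le one_pos (hw x)
          have e : g x / (lam * (2 * V ^ κ)) = 2⁻¹ * (g x / lam * (V ^ κ)⁻¹) := by
            rw [div_eq_mul_inv, div_eq_mul_inv, ENNReal.mul_inv (Or.inl hl0) (Or.inr hc0),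
              ENNReal.mul_inv (Or.inl (by simp)) (Or.inl (by simp))]
            ring
          rw [e, ENNReal.mul_rpow_of_nonneg _ _ hw0.le]
          refine mul_le_mul' ?_ (mul_rpow_le_add (ht x) hw0 hκ (h x) _ _)
          calc (2⁻¹ : ℝ≥0∞) ^ w x ≤ 2⁻¹ ^ (1 : ℝ) :=
                ENNReal.rpow_le_rpow_of_exponent_ge (by simp) (hw x)
            _ = 2⁻¹ := by simp
        · simp [Set.indicator_of_notMem hx, lt_of_lt_of_le one_pos (hw x)]
    _ = 2⁻¹ * ((∫⁻ x, (B.indicator g x / lam) ^ t x) + V⁻¹ * V) := by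
        rw [lintegral_const_mul' _ _ (by simp), lintegral_add_right _ (measurable_const.indicator hB),
          lintegral_indicator_const hB]
    _ ≤ 2⁻¹ * (1 + 1) := by
        rw [ENNReal.inv_mul_cancel h0 hT]; gcongr
    _ = 1 := by
        rw [one_add_one_eq_two]; exact ENNReal.inv_mul_cancel (by simp) (by simp)

/-! ### The reverse inequality for indicators of balls -/

lemma rpow_div_le_of_rpow_le {t w κ V mu : ℝ} (hw : 1 ≤ w)
    (h : 1 / w = 1 / t + κ) (hV : 0 < V) (hmu : 0 < mu) (hle : mu⁻¹ ^ w ≤ 2 / V) :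
    V ^ κ / mu ≤ 2 * V ^ (-(1 / t)) := by
  have hw0 : 0 < w := by linarith
  have h1 : mu⁻¹ ≤ (2 / V) ^ (1 / w) := by
    calc mu⁻¹ = (mu⁻¹ ^ w) ^ (1 / w) := by
          rw [← Real.rpow_mul (by positivity), mul_one_div_cancel hw0.ne', Real.rpow_one]
      _ ≤ _ := Real.rpow_le_rpow (by positivity) hle (by positivity)
  have h2 : (2 : ℝ) ^ (1 / w) ≤ 2 := by
    calc (2 : ℝ) ^ (1 / w) ≤ 2 ^ (1 : ℝ) :=
          Real.rpow_le_rpow_of_exponent_le (by norm_num) (by rw [div_le_one hw0]; exact hw)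
      _ = 2 := by simp
  calc V ^ κ / mu = V ^ κ * mu⁻¹ := div_eq_mul_inv _ _
    _ ≤ V ^ κ * (2 / V) ^ (1 / w) := by gcongr
    _ = 2 ^ (1 / w) * (V ^ κ * V ^ (-(1 / w))) := by
        rw [Real.div_rpow (by norm_num) hV.le, Real.rpow_neg hV.le]; ring
    _ = 2 ^ (1 / w) * V ^ (-(1 / t)) := by
        rw [← Real.rpow_add hV, h]; congr 2; ring
    _ ≤ _ := by gcongr

/-- The reverse of Hölder's inequality for `χ_B`. The set `S` is an exceptional part of `B`
(points close to the origin when `B` is large), outside of which `V ^ (1 / t(·))` is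
constant up to a bounded factor. On `S` the integrand is bounded by `q`, and `q |S|` by `K1`. -/
lemma luxNorm_reverse {n : ℕ} (t w : E n → ℝ) (hwm : Measurable w)
    {κ K1 K2 δ : ℝ} (hK1 : 0 ≤ K1) (hK2 : 0 ≤ K2) (hδ : 0 < δ)
    (ht : ∀ x, 1 ≤ t x) (hw : ∀ x, 1 ≤ w x) (h : ∀ x, 1 / w x = 1 / t x + κ)
    (hδt : ∀ x y, δ ≤ t y / t x)
    {B S : Set (E n)} (hB : MeasurableSet B) (hS : MeasurableSet S) (hSB : S ⊆ B)
    (h0 : volume B ≠ 0) (hT : volume B ≠ ⊤)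
    (hhalf : volume.real S ≤ volume.real B / 2)
    {q : ℝ} (hq0 : 0 ≤ q) (hqS : q * volume.real S ≤ K1)
    (hq : S.Nonempty → ∀ γ, δ ≤ γ → γ ≤ 1 / δ → volume.real B ^ (-γ) ≤ q)
    (hosc : ∀ x ∈ B \ S, ∀ y ∈ B \ S, |Real.log (volume.real B)| * |1 / t x - 1 / t y| ≤ K2) :
    volume B ^ κ * luxNorm t (B.indicator (fun _ => 1)) ≤
      ENNReal.ofReal (2 * Real.exp K2 * (2 + 2 * K1)) * luxNorm w (B.indicator (fun _ => 1)) := by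
  set V := volume.real B with hVdef
  have hV : 0 < V := ENNReal.toReal_pos h0 hT
  have hVE : volume B = ENNReal.ofReal V := (ENNReal.ofReal_toReal hT).symm
  have hST : volume S ≠ ⊤ := ne_top_of_le_ne_top hT (measure_mono hSB)
  set D := 2 + 2 * K1 with hD
  have hD0 : 0 < D := by positivity
  set C := 2 * Real.exp K2 * D with hC
  have hC0 : 0 < C := by positivity
  rw [mul_comm (ENNReal.ofReal C), ← ENNReal.div_le_iff (by simpa using hC0) (by simp)]
  refine le_sInf ?_
  rintro mu ⟨hmu0, hmu1⟩
  rw [ENNReal.div_le_iff (by simpa using hC0) (by simp)]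
  by_cases hmuT : mu = ⊤
  · rw [hmuT, ENNReal.top_mul (by simpa using hC0)]; exact le_top
  obtain ⟨m, hm, rfl⟩ : ∃ m : ℝ, 0 < m ∧ mu = ENNReal.ofReal m :=
    ⟨mu.toReal, ENNReal.toReal_pos hmu0 hmuT, (ENNReal.ofReal_toReal hmuT).symm⟩
  -- The modular of `χ_B` with respect to a positive real `a`, as an integral over `B`.
  have hmod : ∀ (e : E n → ℝ) (_ : ∀ x, 1 ≤ e x) (a : ℝ), 0 < a →
      (∫⁻ x, (B.indicator (fun _ => (1 : ℝ≥0∞)) x / ENNReal.ofReal a) ^ e x) =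
        ∫⁻ x in B, ENNReal.ofReal (a⁻¹ ^ e x) := by
    intro e he a ha
    rw [← lintegral_indicator hB]
    congr 1
    ext x
    by_cases hx : x ∈ B
    · simp only [Set.indicator_of_mem hx]
      rw [one_div, ← ENNReal.ofReal_inv_of_pos ha,
        ENNReal.ofReal_rpow_of_pos (by positivity)]
    · simp [Set.indicator_of_notMem hx, lt_of_lt_of_le one_pos (he x)]
  rw [hmod w hw m hm] at hmu1
  have hBS : volume.real (B \ S) = V - volume.real S :=
    measureReal_sdiff hSB hS (h₁ := hT)
  have hBS0 : V / 2 ≤ volume.real (B \ S) := by linarith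
  have hBST : volume (B \ S) ≠ ⊤ := ne_top_of_le_ne_top hT (measure_mono Set.sdiff_subset)
  have hBSpos : volume (B \ S) ≠ 0 := by
    intro h'
    have : volume.real (B \ S) = 0 := by simp [measureReal_def, h']
    linarith
  have hfm : Measurable fun x => ENNReal.ofReal (m⁻¹ ^ w x) :=
    (measurable_const.pow hwm).ennreal_ofReal
  -- A point of `B \ S` where `m⁻¹ ^ w` is at most its average, hence at most `2 / V`.
  obtain ⟨x, hx, hxle⟩ := exists_le_setLAverage hBSpos hBST
    (f := fun x => ENNReal.ofReal (m⁻¹ ^ w x)) hfm.aemeasurable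
  have hx2 : m⁻¹ ^ w x ≤ 2 / V := by
    have h3 : ENNReal.ofReal (m⁻¹ ^ w x) ≤ ENNReal.ofReal (2 / V) := by
      refine hxle.trans ?_
      rw [setLAverage_eq]
      calc (∫⁻ x in B \ S, ENNReal.ofReal (m⁻¹ ^ w x)) / volume (B \ S)
          ≤ 1 / ENNReal.ofReal (V / 2) := by
            gcongr
            · exact (lintegral_mono_set Set.sdiff_subset).trans hmu1
            · rw [← ENNReal.ofReal_toReal hBST]
              exact ENNReal.ofReal_le_ofReal hBS0
        _ = _ := by
            rw [one_div, ← ENNReal.ofReal_inv_of_pos (by positivity), inv_div]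
    exact (ENNReal.ofReal_le_ofReal_iff (by positivity)).1 h3
  have hZ := rpow_div_le_of_rpow_le (hw x) (h x) hV hm hx2
  set lam := C * m / V ^ κ with hlam
  have hlam0 : 0 < lam := by positivity
  have hZ' : lam⁻¹ ≤ (Real.exp K2)⁻¹ * V ^ (-(1 / t x)) * D⁻¹ := by
    have : lam⁻¹ = (2 * Real.exp K2 * D)⁻¹ * (V ^ κ / m) := by
      rw [hlam, hC]; field_simp
    rw [this]
    calc (2 * Real.exp K2 * D)⁻¹ * (V ^ κ / m)
        ≤ (2 * Real.exp K2 * D)⁻¹ * (2 * V ^ (-(1 / t x))) := by gcongr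
      _ = _ := by field_simp
  have hDpow : ∀ y, D⁻¹ ^ t y ≤ D⁻¹ := fun y => by
    calc D⁻¹ ^ t y ≤ D⁻¹ ^ (1 : ℝ) :=
          Real.rpow_le_rpow_of_exponent_ge (by positivity)
            (inv_le_one_of_one_le₀ (by linarith)) (ht y)
      _ = D⁻¹ := by simp
  have ht0 : ∀ y, 0 < t y := fun y => lt_of_lt_of_le one_pos (ht y)
  have hgood : ∀ y ∈ B \ S, lam⁻¹ ^ t y ≤ V⁻¹ * D⁻¹ := by
    intro y hy
    have h4 : (Real.exp K2)⁻¹ * V ^ (-(1 / t x)) ≤ V ^ (-(1 / t y)) := by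
      rw [Real.rpow_def_of_pos hV, Real.rpow_def_of_pos hV, ← Real.exp_neg, ← Real.exp_add,
        Real.exp_le_exp]
      have := hosc x hx y hy
      rw [← abs_mul] at this
      have := neg_le_of_abs_le this
      nlinarith
    calc lam⁻¹ ^ t y ≤ (V ^ (-(1 / t y)) * D⁻¹) ^ t y := by
          refine Real.rpow_le_rpow (by positivity) (hZ'.trans ?_) (ht0 y).le
          gcongr
      _ = V⁻¹ * D⁻¹ ^ t y := by
          rw [Real.mul_rpow (by positivity) (by positivity), ← Real.rpow_mul hV.le]
          have : -(1 / t y) * t y = -1 := by have := (ht0 y).ne'; field_simp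
          rw [this, Real.rpow_neg_one]
      _ ≤ _ := by gcongr; exact hDpow y
  have hbad : ∀ y ∈ S, lam⁻¹ ^ t y ≤ q * D⁻¹ := by
    intro y hy
    calc lam⁻¹ ^ t y ≤ (V ^ (-(1 / t x)) * D⁻¹) ^ t y := by
          refine Real.rpow_le_rpow (by positivity) (hZ'.trans ?_) (ht0 y).le
          gcongr
          have : (Real.exp K2)⁻¹ ≤ 1 := inv_le_one_of_one_le₀ (Real.one_le_exp hK2)
          have h5 : 0 < V ^ (-(1 / t x)) := by positivity
          nlinarith
      _ = V ^ (-(t y / t x)) * D⁻¹ ^ t y := by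
          rw [Real.mul_rpow (by positivity) (by positivity), ← Real.rpow_mul hV.le]
          congr 2; ring
      _ ≤ q * D⁻¹ := by
          refine mul_le_mul (hq ⟨y, hy⟩ _ (hδt x y) ?_) (hDpow y) (by positivity) hq0
          rw [← inv_div, ← one_div]
          exact one_div_le_one_div_of_le hδ (hδt y x)
  have hY : luxNorm t (B.indicator (fun _ => 1)) ≤ ENNReal.ofReal lam := by
    refine sInf_le ⟨by simpa using hlam0, ?_⟩
    rw [hmod t ht lam hlam0]
    calc ∫⁻ y in B, ENNReal.ofReal (lam⁻¹ ^ t y)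
        = (∫⁻ y in B ∩ S, ENNReal.ofReal (lam⁻¹ ^ t y)) +
            ∫⁻ y in B \ S, ENNReal.ofReal (lam⁻¹ ^ t y) :=
          (lintegral_inter_add_sdiff _ _ hS).symm
      _ ≤ ENNReal.ofReal (q * D⁻¹) * volume S + ENNReal.ofReal (V⁻¹ * D⁻¹) * volume B := by
          rw [Set.inter_eq_self_of_subset_right hSB]
          gcongr
          · rw [← setLIntegral_const]
            exact setLIntegral_mono measurable_const fun y hy =>
              ENNReal.ofReal_le_ofReal (hbad y hy)
          · refine le_trans ?_ (mul_le_mul_right (measure_mono (Set.sdiff_subset (s := B) (t := S))) _)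
            rw [← setLIntegral_const]
            exact setLIntegral_mono measurable_const fun y hy =>
              ENNReal.ofReal_le_ofReal (hgood y hy)
      _ = ENNReal.ofReal (q * D⁻¹ * volume.real S + V⁻¹ * D⁻¹ * V) := by
          rw [hVE, ← ENNReal.ofReal_toReal hST, ← ENNReal.ofReal_mul (by positivity),
            ← ENNReal.ofReal_mul (by positivity), ← ENNReal.ofReal_add (by positivity) (by positivity)]
          rfl
      _ ≤ 1 := by
          rw [ENNReal.ofReal_le_one]
          have : q * D⁻¹ * volume.real S + V⁻¹ * D⁻¹ * V = (q * volume.real S + 1) / D := by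
            field_simp
          rw [this, div_le_one hD0]
          linarith
  calc volume B ^ κ * luxNorm t (B.indicator (fun _ => 1))
      ≤ ENNReal.ofReal (V ^ κ) * ENNReal.ofReal lam := by
        rw [hVE, ENNReal.ofReal_rpow_of_pos hV]; gcongr
    _ = ENNReal.ofReal m * ENNReal.ofReal C := by
        rw [← ENNReal.ofReal_mul (by positivity), ← ENNReal.ofReal_mul (by positivity), hlam]
        congr 1; field_simp
    _ ≤ _ := le_rfl

/-! ### Oscillation of a log-Hölder exponent over a ball -/

lemma abs_log_le_of_le_four {R : ℝ} (hR : 0 < R) (hR4 : R ≤ 4) {d : ℝ} (hd : 0 < d)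
    (hdR : d ≤ 2 * R) : |Real.log R| ≤ 4 * Real.log (Real.exp 1 + 1 / d) := by
  have hL1 : 1 ≤ Real.log (Real.exp 1 + 1 / d) := by
    rw [Real.le_log_iff_exp_le (by positivity)]
    have : 0 < 1 / d := by positivity
    linarith
  have hlog2 := Real.log_two_lt_d9
  have hL2 : -(Real.log 2 + Real.log R) ≤ Real.log (Real.exp 1 + 1 / d) := by
    rw [← Real.log_mul (by norm_num) hR.ne', ← Real.log_inv]
    apply Real.log_le_log (by positivity)
    have h1 : (2 * R)⁻¹ ≤ 1 / d := by
      rw [one_div]; exact inv_anti₀ hd hdR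
    have := Real.exp_pos 1
    linarith
  have hlog4 : Real.log R ≤ 2 * Real.log 2 := by
    calc Real.log R ≤ Real.log (2 ^ 2) := Real.log_le_log hR (by linarith)
      _ = _ := by rw [Real.log_pow]; norm_num
  rw [abs_le]
  constructor <;> linarith

/-- Off a small exceptional set `S`, the oscillation of a log-Hölder exponent over a ball `B` is
`O(1 / |log |B||)`. For radius at most `4` no exception is needed; otherwise `S` consists of
the points of `B` at distance less than `R ^ (δ / 2)` from the origin. -/
lemma exists_exceptional {n : ℕ} (hn : 1 ≤ n) {p : E n → ℝ} (hp : LogHolder n p) {δ : ℝ}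
    (hδ : 0 < δ) (hδ1 : δ ≤ 1) :
    ∃ K1 K2 : ℝ, 0 ≤ K1 ∧ 0 ≤ K2 ∧ ∀ (c : E n) (R : ℝ), 0 < R →
      ∃ (S : Set (E n)) (q : ℝ), MeasurableSet S ∧ S ⊆ ball c R ∧
        volume.real S ≤ volume.real (ball c R) / 2 ∧ 0 ≤ q ∧ q * volume.real S ≤ K1 ∧
        (S.Nonempty → ∀ γ, δ ≤ γ → γ ≤ 1 / δ → volume.real (ball c R) ^ (-γ) ≤ q) ∧
        (∀ x ∈ ball c R \ S, ∀ y ∈ ball c R \ S,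
          |Real.log (volume.real (ball c R))| * |p x - p y| ≤ K2) := by
  obtain ⟨C, hC1, hC2⟩ := hp
  have hC : 0 ≤ C := by simpa using (abs_nonneg _).trans (hC1 0 0)
  set ω := volume.real (ball (0 : E n) 1) with hω
  have hω0 : 0 < ω :=
    ENNReal.toReal_pos (measure_ball_pos _ _ one_pos).ne' measure_ball_lt_top.ne
  have hvol : ∀ (c : E n) (R : ℝ), 0 < R → volume.real (ball c R) = R ^ n * ω := by
    intro c R hR
    rw [measureReal_def, Measure.addHaar_ball_of_pos _ _ hR, ENNReal.toReal_mul,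
      ENNReal.toReal_ofReal (by positivity)]
    simp [hω, measureReal_def]
  have hlogV : ∀ R : ℝ, 0 < R → |Real.log (R ^ n * ω)| ≤ n * |Real.log R| + |Real.log ω| := by
    intro R hR
    rw [Real.log_mul (by positivity) hω0.ne', Real.log_pow]
    refine (abs_add_le _ _).trans ?_
    rw [abs_mul, Nat.abs_cast]
  -- A logarithm `A ≤ N L` is compensated by an oscillation `d ≤ C / L`.
  have habs : ∀ {A L d N : ℝ}, 1 ≤ L → 0 ≤ N → A ≤ N * L → 0 ≤ d → d ≤ C / L → A * d ≤ N * C := by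
    intro A L d N hL hN hA hd hdL
    have hL0 : 0 < L := by linarith
    calc A * d ≤ N * L * d := by gcongr
      _ ≤ N * L * (C / L) := by gcongr
      _ = N * C := by field_simp
  refine ⟨Real.exp (|Real.log ω| / δ) * ω,
    (n * 4 + |Real.log ω|) * C + (n * (2 / δ) + |Real.log ω|) * C, by positivity, by positivity, ?_⟩
  intro c R hR
  have hnonneg1 : 0 ≤ (n * 4 + |Real.log ω|) * C := by positivity
  have hnonneg2 : 0 ≤ (n * (2 / δ) + |Real.log ω|) * C := by positivity
  rw [hvol c R hR]
  rcases le_total R 4 with hR4 | hR4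
  · refine ⟨∅, 0, MeasurableSet.empty, Set.empty_subset _, by simp; positivity, le_rfl,
      by simp; positivity, by simp, ?_⟩
    intro x hx y hy
    rcases eq_or_ne x y with rfl | hxy
    · simp; positivity
    have hd : 0 < dist x y := dist_pos.2 hxy
    have hdR : dist x y ≤ 2 * R := by
      have h1 := mem_ball.1 hx.1
      have h2 := mem_ball.1 hy.1
      have := dist_triangle_right x y c
      linarith
    have hL1 : 1 ≤ Real.log (Real.exp 1 + 1 / dist x y) := by
      rw [Real.le_log_iff_exp_le (by positivity)]
      have : 0 < 1 / dist x y := by positivity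
      linarith
    refine (habs (N := n * 4 + |Real.log ω|) hL1 (by positivity) ?_ (abs_nonneg _)
      (hC1 x y)).trans (by linarith)
    have h3 := abs_log_le_of_le_four hR hR4 hd hdR
    calc |Real.log (R ^ n * ω)| ≤ n * |Real.log R| + |Real.log ω| := hlogV R hR
      _ ≤ n * (4 * Real.log (Real.exp 1 + 1 / dist x y)) +
          |Real.log ω| * Real.log (Real.exp 1 + 1 / dist x y) := by
          gcongr
          exact le_mul_of_one_le_right (abs_nonneg _) hL1
      _ = _ := by ring
  · have hR1 : 1 ≤ R := by linarith
    set ρ := R ^ (δ / 2) with hρ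
    have hρ0 : 0 < ρ := by positivity
    have hSle : volume.real (ball c R ∩ ball 0 ρ) ≤ ρ ^ n * ω := by
      rw [← hvol 0 ρ hρ0]
      exact measureReal_mono Set.inter_subset_right measure_ball_lt_top.ne
    have hρn : ρ ^ n = R ^ (n * (δ / 2)) := by
      rw [hρ, ← Real.rpow_natCast, ← Real.rpow_mul hR.le, mul_comm]
    refine ⟨ball c R ∩ ball 0 ρ, Real.exp (|Real.log ω| / δ) * R ^ (-(n * δ)),
      measurableSet_ball.inter measurableSet_ball, Set.inter_subset_left, ?_, by positivity,
      ?_, ?_, ?_⟩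
    · -- Since `δ ≤ 1` and `4 ≤ R`, one has `ρ ≤ √R ≤ R / 2`.
      have h1 : ρ ≤ R / 2 := by
        have h2 : ρ ≤ Real.sqrt R := by
          rw [Real.sqrt_eq_rpow]
          exact Real.rpow_le_rpow_of_exponent_le hR1 (by linarith)
        have h3 : Real.sqrt R * Real.sqrt R = R := Real.mul_self_sqrt hR.le
        have h4 : 2 ≤ Real.sqrt R := Real.le_sqrt_of_sq_le (by linarith)
        nlinarith
      have h5 : ρ ^ n ≤ R ^ n / 2 := by
        calc ρ ^ n ≤ (R / 2) ^ n := by gcongr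
          _ = R ^ n / 2 ^ n := div_pow _ _ _
          _ ≤ R ^ n / 2 := by
            gcongr
            calc (2 : ℝ) = 2 ^ 1 := by norm_num
              _ ≤ 2 ^ n := pow_le_pow_right₀ (by norm_num) hn
      refine hSle.trans ?_
      nlinarith
    · calc Real.exp (|Real.log ω| / δ) * R ^ (-(n * δ)) * volume.real (ball c R ∩ ball 0 ρ)
          ≤ Real.exp (|Real.log ω| / δ) * R ^ (-(n * δ)) * (R ^ (n * (δ / 2)) * ω) := by
            rw [← hρn]; gcongr
        _ = Real.exp (|Real.log ω| / δ) * ω * R ^ (-(n * δ) + n * (δ / 2)) := by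
            rw [Real.rpow_add hR]; ring
        _ ≤ Real.exp (|Real.log ω| / δ) * ω * 1 := by
            gcongr
            apply Real.rpow_le_one_of_one_le_of_nonpos hR1
            have : 0 ≤ n * δ := by positivity
            linarith
        _ = _ := mul_one _
    · intro _ γ hγ1 hγ2
      have hγ0 : 0 < γ := by linarith
      rw [Real.mul_rpow (by positivity) hω0.le, mul_comm]
      gcongr
      · rw [Real.rpow_def_of_pos hω0, Real.exp_le_exp]
        calc Real.log ω * -γ ≤ |Real.log ω| * γ := by
              have := neg_abs_le (Real.log ω); nlinarith
          _ ≤ |Real.log ω| * (1 / δ) := by gcongr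
          _ = _ := by ring
      · rw [← Real.rpow_natCast, ← Real.rpow_mul hR.le]
        apply Real.rpow_le_rpow_of_exponent_le hR1
        have : (0 : ℝ) ≤ n := by positivity
        nlinarith
    · intro x hx y hy
      have hnorm : ∀ z ∈ ball c R \ (ball c R ∩ ball 0 ρ), ρ ≤ ‖z‖ := by
        intro z hz
        by_contra hlt
        exact hz.2 ⟨hz.1, by simpa using hlt⟩
      set L := Real.log (Real.exp 1 + ρ) with hL
      have hL1 : 1 ≤ L := by
        rw [hL, Real.le_log_iff_exp_le (by positivity)]
        linarith
      have hL2 : Real.log R ≤ 2 / δ * L := by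
        have h1 : δ / 2 * Real.log R ≤ L := by
          rw [← Real.log_rpow hR]
          exact Real.log_le_log hρ0 (by have := Real.exp_pos 1; linarith)
        calc Real.log R = 2 / δ * (δ / 2 * Real.log R) := by field_simp
          _ ≤ _ := by gcongr
      have hmono : ∀ z : E n, ρ ≤ ‖z‖ → C / Real.log (Real.exp 1 + ‖z‖) ≤ C / L := by
        intro z hz
        have hL0 : 0 < L := by linarith
        have : L ≤ Real.log (Real.exp 1 + ‖z‖) := by
          rw [hL]
          exact Real.log_le_log (by positivity) (by linarith)
        gcongr
      have hdiff : |p x - p y| ≤ C / L := by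
        rcases le_total ‖x‖ ‖y‖ with hxy | hxy
        · exact (hC2 x y hxy).trans (hmono x (hnorm x hx))
        · rw [abs_sub_comm]
          exact (hC2 y x hxy).trans (hmono y (hnorm y hy))
      refine (habs (N := n * (2 / δ) + |Real.log ω|) hL1 (by positivity) ?_ (abs_nonneg _)
        hdiff).trans (by linarith)
      calc |Real.log (R ^ n * ω)| ≤ n * |Real.log R| + |Real.log ω| := hlogV R hR
        _ ≤ n * (2 / δ * L) + |Real.log ω| * L := by
            rw [abs_of_nonneg (Real.log_nonneg hR1)]
            gcongr
            exact le_mul_of_one_le_right (abs_nonneg _) hL1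
        _ = _ := by ring

/-! ### The embedding of weight classes -/

/-- if `1/r(·) = 1/p(·) − 1/s` with `p⁺ < s`, `1 < ν < min{p⁻, 2}`,
and `u^ν ∈ A_{p(·)/ν,∞}`, then `u ∈ A_{r(·),∞}`. -/
theorem statement19 (n : ℕ) (s ν : ℝ) (p r : E n → ℝ) (u : E n → ℝ≥0∞)
    (hn : 1 ≤ n)
    (hpmeas : Measurable p) (pm pM : ℝ) (hpm : ∀ x, pm ≤ p x) (hpM : ∀ x, p x ≤ pM)
    (h1pm : 1 < pm) (hpMs : pM < s) (hplog : LogHolder n p)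
    (hν1 : 1 < ν) (hνpm : ν < pm) (hν2 : ν < 2)
    (hrdef : ∀ x, 1 / r x = 1 / p x - 1 / s)
    (humeas : Measurable u)
    (huA : AvarInf n (fun x => p x / ν) (fun x => (u x) ^ ν)) :
    AvarInf n r u := by
  have hν0 : 0 < ν := by linarith
  have hpmM : pm ≤ pM := (hpm 0).trans (hpM 0)
  have hs0 : 0 < s := by linarith
  have hp0 : ∀ x, 0 < p x := fun x => by linarith [hpm x]
  set κ : ℝ := 1 - 1 / ν + 1 / s with hκdef
  have hκ : 0 < κ := by
    have : 1 / ν < 1 := by rw [div_lt_one hν0]; exact hν1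
    have : 0 < 1 / s := by positivity
    linarith
  -- `t(·) = ν (p(·)/ν)'`, so that `1/t = 1/ν - 1/p`; and `w = r'`.
  set t : E n → ℝ := fun x => ν * ((p x / ν) / (p x / ν - 1)) with ht
  set w : E n → ℝ := fun x => r x / (r x - 1) with hw
  have hpν : ∀ x, 0 < p x - ν := fun x => by linarith [hpm x]
  have hteq : ∀ x, t x = ν * p x / (p x - ν) := fun x => by
    have h1 := (hpν x).ne'
    have h2 : p x / ν - 1 = (p x - ν) / ν := by field_simp
    simp only [ht, h2]
    field_simp
  have htinv : ∀ x, 1 / t x = 1 / ν - 1 / p x := fun x => by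
    have h1 := (hpν x).ne'
    have h2 := (hp0 x).ne'
    rw [hteq]; field_simp
  have ht0 : ∀ x, 0 < t x := fun x => by
    rw [hteq]; exact div_pos (mul_pos hν0 (hp0 x)) (hpν x)
  have htge : ∀ x, 1 ≤ t x := fun x => by
    rw [hteq, le_div_iff₀ (hpν x)]
    nlinarith [hp0 x]
  have hrinv0 : ∀ x, 0 < 1 / r x := fun x => by
    rw [hrdef, sub_pos]
    exact one_div_lt_one_div_of_lt (hp0 x) (by linarith [hpM x])
  have hr0 : ∀ x, 0 < r x := fun x => one_div_pos.1 (hrinv0 x)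
  have hr1 : ∀ x, 1 < r x := fun x => by
    have h1 : 1 / p x < 1 := by rw [div_lt_one (hp0 x)]; linarith [hpm x]
    have h2 : 0 < 1 / s := by positivity
    have h3 : 1 / r x < 1 := by rw [hrdef]; linarith
    rwa [div_lt_one (hr0 x)] at h3
  have hwinv : ∀ x, 1 / w x = 1 / t x + κ := fun x => by
    have h1 : 1 / w x = 1 - 1 / r x := by
      have := (hr0 x).ne'
      have : r x - 1 ≠ 0 := by linarith [hr1 x]
      simp only [hw]; field_simp
    rw [h1, hrdef, htinv, hκdef]; ring
  have hwge : ∀ x, 1 ≤ w x := fun x => by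
    simp only [hw]
    rw [le_div_iff₀ (by linarith [hr1 x])]; linarith
  have hrmeas : Measurable r := by
    have : r = fun x => (1 / p x - 1 / s)⁻¹ := by
      ext x; rw [← hrdef]; simp
    rw [this]; fun_prop
  have hwmeas : Measurable w := by simp only [hw]; fun_prop
  -- A lower bound for `t y / t x = (1/t x) / (1/t y)`.
  set δ : ℝ := (1 / ν - 1 / pm) / (1 / ν) with hδdef
  have hνpm' : 1 / pm < 1 / ν := one_div_lt_one_div_of_lt hν0 hνpm
  have hδ0 : 0 < δ := div_pos (by linarith) (by positivity)
  have hδ1 : δ ≤ 1 := by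
    rw [hδdef, div_le_one (by positivity)]
    have : 0 < 1 / pm := one_div_pos.2 (by linarith)
    linarith
  have hδt : ∀ x y, δ ≤ t y / t x := fun x y => by
    have e : t y / t x = (1 / t x) / (1 / t y) := by
      have := (ht0 x).ne'
      have := (ht0 y).ne'
      field_simp
    rw [e]
    have hty : 0 < 1 / t y := one_div_pos.2 (ht0 y)
    have h1 : 1 / p x ≤ 1 / pm := one_div_le_one_div_of_le (by linarith) (hpm x)
    have h2 : 0 < 1 / p y := one_div_pos.2 (hp0 y)
    exact div_le_div₀ (one_div_pos.2 (ht0 x)).le (by rw [htinv]; linarith) hty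
      (by rw [htinv]; linarith)
  have htp : ∀ x y, |1 / t x - 1 / t y| ≤ |p x - p y| := fun x y => by
    have hx := (hp0 x).ne'
    have hy := (hp0 y).ne'
    have e : 1 / t x - 1 / t y = (p x - p y) / (p x * p y) := by
      rw [htinv, htinv]; field_simp; ring
    rw [e, abs_div]
    refine div_le_self (abs_nonneg _) ?_
    rw [abs_of_pos (mul_pos (hp0 x) (hp0 y))]
    nlinarith [hpm x, hpm y]
  obtain ⟨K1, K2, hK1, hK2, hgeo⟩ := exists_exceptional hn hplog hδ0 hδ1
  obtain ⟨C, hC⟩ := huA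
  refine ⟨2 * C ^ (1 / ν) * (2 * Real.exp K2 * (2 + 2 * K1)).toNNReal, fun c R hR => ?_⟩
  set B := ball c R with hB
  have hB0 : volume B ≠ 0 := (measure_ball_pos _ _ hR).ne'
  have hBT : volume B ≠ ⊤ := measure_ball_lt_top.ne
  have hess : essSup (fun x => u x ^ ν) (volume.restrict B) =
      essSup u (volume.restrict B) ^ ν :=
    ((ENNReal.orderIsoRpow ν hν0).essSup_apply u (volume.restrict B)).symm
  have hind : ∀ g : E n → ℝ≥0∞, (B.indicator fun y => g y ^ ν) = fun y => (B.indicator g y) ^ ν := by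
    intro g
    ext y
    by_cases hy : y ∈ B
    · simp [hy]
    · simp [hy, hν0]
  have hCB := hC c R hR
  simp only [← ENNReal.inv_rpow] at hCB
  rw [hess, hind (fun y => (u y)⁻¹), luxNorm_rpow _ _ hν0] at hCB
  have hone : (B.indicator fun _ => (1 : ℝ≥0∞)) = fun y => (B.indicator (fun _ => 1) y) ^ ν := by
    simpa using hind (fun _ => 1)
  rw [hone, luxNorm_rpow _ _ hν0] at hCB
  -- The hypothesis, after taking `ν`-th roots.
  have hroot : essSup u (volume.restrict B) * luxNorm t (B.indicator fun y => (u y)⁻¹) ≤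
      (C : ℝ≥0∞) ^ (1 / ν) * luxNorm t (B.indicator fun _ => 1) := by
    have hcancel : ∀ a : ℝ≥0∞, (a ^ ν) ^ (1 / ν) = a := fun a => by
      rw [← ENNReal.rpow_mul]; field_simp; simp
    have h1 := ENNReal.rpow_le_rpow hCB (z := 1 / ν) (by positivity)
    rw [ENNReal.mul_rpow_of_nonneg _ _ (by positivity),
      ENNReal.mul_rpow_of_nonneg _ _ (by positivity), hcancel, hcancel, hcancel] at h1
    exact h1
  obtain ⟨S, q, hS, hSB, hhalf, hq0, hqS, hq, hosc⟩ := hgeo c R hR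
  have hrev := luxNorm_reverse t w hwmeas hK1 hK2 hδ0 htge hwge hwinv hδt
    measurableSet_ball hS hSB hB0 hBT hhalf hq0 hqS hq
    (fun x hx y hy => (mul_le_mul_of_nonneg_left (htp x y) (abs_nonneg _)).trans (hosc x hx y hy))
  have hhol := luxNorm_holder t w hκ ht0 hwge hwinv measurableSet_ball hB0 hBT
    (fun y => (u y)⁻¹)
  calc essSup u (volume.restrict B) * luxNorm w (B.indicator fun y => (u y)⁻¹)
      ≤ essSup u (volume.restrict B) *
          (2 * volume B ^ κ * luxNorm t (B.indicator fun y => (u y)⁻¹)) := by gcongr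
    _ = 2 * volume B ^ κ * (essSup u (volume.restrict B) *
          luxNorm t (B.indicator fun y => (u y)⁻¹)) := by ring
    _ ≤ 2 * volume B ^ κ * ((C : ℝ≥0∞) ^ (1 / ν) * luxNorm t (B.indicator fun _ => 1)) := by
        gcongr
    _ = 2 * (C : ℝ≥0∞) ^ (1 / ν) * (volume B ^ κ * luxNorm t (B.indicator fun _ => 1)) := by ring
    _ ≤ 2 * (C : ℝ≥0∞) ^ (1 / ν) *
          (ENNReal.ofReal (2 * Real.exp K2 * (2 + 2 * K1)) *
            luxNorm w (B.indicator fun _ => 1)) := by gcongr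
    _ = _ := by
        rw [← mul_assoc, ENNReal.coe_mul, ENNReal.coe_mul,
          ENNReal.coe_rpow_of_nonneg _ (by positivity : 0 ≤ 1 / ν)]
        rfl
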